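/- arXiv:math/0209250 — 5 statements merged into one kernel-verified Lean document; each statement's English description precedes it below -/
import Mathlib

section
/- Let S and T be inverse semigroups with zero and let θ : S → T be a surjective, zero-reflecting, idempotent pure homomorphism. Then the universal groups G(S) and G(T) are isomorphic. -/
/-- The relators `(s)·(t)·((s·t))⁻¹` over pairs `s, t` with `s·t ≠ 0`, as elements of the
free group on `S ∖ {0}`. -/
def sgRelators (S : Type*) [SemigroupWithZero S] : Set (FreeGroup {s : S // s ≠ 0}) :=
  {r | ∃ s t u : {s : S // s ≠ 0}, (u : S) = (s : S) * (t : S) ∧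
       r = FreeGroup.of s * FreeGroup.of t * (FreeGroup.of u)⁻¹}

/-- The universal group `G(S)` of a semigroup with zero `S`: the free group on `S ∖ {0}`
modulo the normal closure of the relators. -/
abbrev UnivGroup (S : Type*) [SemigroupWithZero S] : Type _ :=
  FreeGroup {s : S // s ≠ 0} ⧸ Subgroup.normalClosure (sgRelators S)

/-!
If `θ s = θ t` with `s ≠ 0` and `s * x * s = s`, then `x * s` is a nonzero idempotent, and so is
`x * t`, because `θ (x * t) = θ (x * s)` and `θ` is idempotent pure. Nonzero idempotents are trivial
in the universal group, so `s` and `t` both map to the inverse of the image of `x`. Hence the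
canonical map from `S ∖ {0}` to `G(S)` is constant on the fibres of `θ`, and composing it with a
section of `θ` gives the inverse of the induced homomorphism `G(S) → G(T)`.
-/

/-- A map from the nonzero elements of a semigroup with zero that respects every nonzero product.
The homomorphisms out of the universal group correspond to such maps. -/
def IsPartialHom {S M : Type*} [SemigroupWithZero S] [Mul M] (f : {s : S // s ≠ 0} → M) : Prop :=
  ∀ s t u : {s : S // s ≠ 0}, (u : S) = s * t → f u = f s * f t

/-- The map between nonzero elements induced by a zero-reflecting homomorphism. -/
def nonzeroMap {S T : Type*} [SemigroupWithZero S] [SemigroupWithZero T] (θ : S →ₙ* T)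
    (hθ : ∀ s, θ s = 0 ↔ s = 0) : {s : S // s ≠ 0} → {t : T // t ≠ 0} :=
  Subtype.map θ fun s => (hθ s).not.mpr

section nonzeroMap

variable {S T : Type*} [SemigroupWithZero S] [SemigroupWithZero T] {θ : S →ₙ* T}
  (hθ : ∀ s, θ s = 0 ↔ s = 0)

theorem nonzeroMap_surjective (hsurj : Function.Surjective θ) :
    Function.Surjective (nonzeroMap θ hθ) := by
  rintro ⟨t, ht⟩
  obtain ⟨s, rfl⟩ := hsurj t
  exact ⟨⟨s, (hθ s).not.mp ht⟩, rfl⟩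

variable {M : Type*} [Mul M]

theorem IsPartialHom.comp_nonzeroMap {f : {t : T // t ≠ 0} → M} (hf : IsPartialHom f) :
    IsPartialHom (f ∘ nonzeroMap θ hθ) := by
  intro s t u hu
  exact hf _ _ _ ((congrArg θ hu).trans (map_mul θ _ _))

theorem IsPartialHom.of_comp_nonzeroMap (hsurj : Function.Surjective θ) {f : {t : T // t ≠ 0} → M}
    (hf : IsPartialHom (f ∘ nonzeroMap θ hθ)) : IsPartialHom f := by
  intro s' t' u' hu
  obtain ⟨s, rfl⟩ := nonzeroMap_surjective hθ hsurj s'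
  obtain ⟨t, rfl⟩ := nonzeroMap_surjective hθ hsurj t'
  have hmul : θ (s * t) = u' := (map_mul θ _ _).trans hu.symm
  have hst : (s * t : S) ≠ 0 := (hθ _).not.mp (hmul ▸ u'.2)
  obtain rfl : nonzeroMap θ hθ ⟨s * t, hst⟩ = u' := Subtype.ext hmul
  exact hf s t ⟨s * t, hst⟩ rfl

end nonzeroMap

namespace UnivGroup

variable {S : Type*} [SemigroupWithZero S]

/-- The canonical map from the nonzero elements of `S` to the universal group of `S`. -/
def of (s : {s : S // s ≠ 0}) : UnivGroup S :=
  PresentedGroup.of s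

theorem isPartialHom_of : IsPartialHom (of : {s : S // s ≠ 0} → UnivGroup S) := by
  intro s t u hu
  have hrel : of s * of t * (of u)⁻¹ = 1 :=
    PresentedGroup.one_of_mem (rels := sgRelators S) ⟨s, t, u, hu, rfl⟩
  exact (mul_inv_eq_one.mp hrel).symm

section lift

variable {G : Type*} [Group G]

/-- The homomorphism from the universal group given by its universal property. -/
def lift (f : {s : S // s ≠ 0} → G) (hf : IsPartialHom f) : UnivGroup S →* G :=
  PresentedGroup.toGroup (rels := sgRelators S) (f := f) <| by
    rintro _ ⟨s, t, u, hu, rfl⟩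
    simp [hf s t u hu]

theorem lift_of {f : {s : S // s ≠ 0} → G} (hf : IsPartialHom f) (s : {s : S // s ≠ 0}) :
    lift f hf (of s) = f s :=
  PresentedGroup.toGroup.of _

theorem hom_ext {φ ψ : UnivGroup S →* G} (h : ∀ s, φ (of s) = ψ (of s)) : φ = ψ :=
  PresentedGroup.ext (rels := sgRelators S) h

end lift

theorem of_eq_one_of_isIdempotentElem {e : {s : S // s ≠ 0}} (he : IsIdempotentElem (e : S)) :
    of e = 1 :=
  left_eq_mul.mp (isPartialHom_of e e e he.symm)

theorem of_eq_inv_of_isIdempotentElem_mul {x s : {s : S // s ≠ 0}} (hne : (x * s : S) ≠ 0)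
    (hidem : IsIdempotentElem (x * s : S)) : of s = (of x)⁻¹ := by
  let e : {s : S // s ≠ 0} := ⟨(x : S) * s, hne⟩
  have hmul : of e = of x * of s := isPartialHom_of x s e rfl
  have hone : of e = 1 := of_eq_one_of_isIdempotentElem hidem
  exact eq_inv_of_mul_eq_one_right (hmul.symm.trans hone)

variable {T : Type*} [SemigroupWithZero T] {θ : S →ₙ* T}

theorem of_eq_of_map_eq (hθ : ∀ s, θ s = 0 ↔ s = 0)
    (hpure : ∀ a, IsIdempotentElem (θ a) → IsIdempotentElem a) {s t : {s : S // s ≠ 0}}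
    (hreg : ∃ x, (s * x * s : S) = s) (hst : θ s = θ t) : of s = of t := by
  obtain ⟨x, hx⟩ := hreg
  have hxs : x * s ≠ 0 := fun h => s.2 (by rw [← hx, mul_assoc, h, mul_zero])
  have hxs_idem : IsIdempotentElem (x * s : S) := by
    rw [IsIdempotentElem, mul_assoc, ← mul_assoc (s : S), hx]
  have hmap : θ (x * s) = θ (x * t) := by rw [map_mul, map_mul, hst]
  have hxt : x * t ≠ 0 := (hθ _).not.mp (hmap ▸ (hθ _).not.mpr hxs)
  have hxt_idem : IsIdempotentElem (x * t : S) := hpure _ (hmap ▸ hxs_idem.map θ)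
  let x' : {s : S // s ≠ 0} := ⟨x, left_ne_zero_of_mul hxs⟩
  calc
    of s = (of x')⁻¹ := of_eq_inv_of_isIdempotentElem_mul hxs hxs_idem
    _ = of t := (of_eq_inv_of_isIdempotentElem_mul hxt hxt_idem).symm

/-- The homomorphism of universal groups induced by a zero-reflecting homomorphism. -/
def map (θ : S →ₙ* T) (hθ : ∀ s, θ s = 0 ↔ s = 0) : UnivGroup S →* UnivGroup T :=
  lift (of ∘ nonzeroMap θ hθ) (isPartialHom_of.comp_nonzeroMap hθ)

theorem map_of (hθ : ∀ s, θ s = 0 ↔ s = 0) (s : {s : S // s ≠ 0}) :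
    map θ hθ (of s) = of (nonzeroMap θ hθ s) :=
  lift_of _ s

/-- The isomorphism of universal groups induced by a surjective zero-reflecting homomorphism whose
fibres are collapsed in the universal group of its domain. -/
noncomputable def mulEquivOfSurjective (hθ : ∀ s, θ s = 0 ↔ s = 0) (hsurj : Function.Surjective θ)
    (hfib : ∀ s t : {s : S // s ≠ 0}, θ s = θ t → of s = of t) : UnivGroup S ≃* UnivGroup T :=
  let σ := Function.surjInv (nonzeroMap_surjective hθ hsurj)
  have hσ : ∀ t, nonzeroMap θ hθ (σ t) = t := Function.surjInv_eq _
  have hof : ∀ s, of (σ (nonzeroMap θ hθ s)) = of s :=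
    fun s => hfib _ _ (congrArg Subtype.val (hσ (nonzeroMap θ hθ s)))
  have hcomp : (of ∘ σ) ∘ nonzeroMap θ hθ = of := funext hof
  have hpartial : IsPartialHom (of ∘ σ) :=
    .of_comp_nonzeroMap hθ hsurj (by rw [hcomp]; exact isPartialHom_of)
  MonoidHom.toMulEquiv (map θ hθ) (lift (of ∘ σ) hpartial)
    (hom_ext fun s => by simp only [MonoidHom.comp_apply, map_of, lift_of, Function.comp_apply,
      hof, MonoidHom.id_apply])
    (hom_ext fun t => by simp only [MonoidHom.comp_apply, map_of, lift_of, Function.comp_apply,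
      hσ, MonoidHom.id_apply])

end UnivGroup

theorem univGroup_iso_of_idempotentPure_general {S T : Type*} [SemigroupWithZero S]
    [SemigroupWithZero T] (hreg : ∀ s : S, ∃ x, s * x * s = s) (θ : S →ₙ* T)
    (hsurj : Function.Surjective θ) (hθ : ∀ s, θ s = 0 ↔ s = 0)
    (hpure : ∀ a, IsIdempotentElem (θ a) → IsIdempotentElem a) :
    Nonempty (UnivGroup S ≃* UnivGroup T) :=
  ⟨UnivGroup.mulEquivOfSurjective hθ hsurj fun s _ =>
    UnivGroup.of_eq_of_map_eq hθ hpure (hreg s)⟩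

/-- If `S` and `T` are inverse semigroups with zero and `θ : S → T` is a surjective,
zero-reflecting, idempotent pure homomorphism, then `G(S) ≅ G(T)`. -/
theorem univGroup_iso_of_idempotentPure {S T : Type*} [SemigroupWithZero S]
    [SemigroupWithZero T]
    (hSinv : ∀ s : S, ∃! t : S, s * t * s = s ∧ t * s * t = t)
    (hTinv : ∀ s : T, ∃! t : T, s * t * s = s ∧ t * s * t = t)
    (θ : S → T)
    (hhom : ∀ s t : S, θ (s * t) = θ s * θ t)
    (hsurj : Function.Surjective θ)
    (hzero : ∀ s : S, θ s = 0 ↔ s = 0)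
    (hip : ∀ a : S, θ a * θ a = θ a → a * a = a) :
    Nonempty (UnivGroup S ≃* UnivGroup T) := by
  exact univGroup_iso_of_idempotentPure_general (fun s => (hSinv s).exists.imp fun _ => And.left)
    ⟨θ, hhom⟩ hsurj hzero hip
end

section
/- Let D ⊆ ℝⁿ be a Delone set of finite local complexity. Then the group G_D is finitely generated. -/
open Pointwise

/-- The relators `(x−y)·(y−z)·((x−z))⁻¹`, `x, y, z ∈ D`, as elements of the free group on
the set of difference vectors `D − D`. -/
def pointRelators {E : Type*} [AddGroup E] (D : Set E) : Set (FreeGroup ↥(D - D)) :=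
  {r | ∃ (x y z : E) (hx : x ∈ D) (hy : y ∈ D) (hz : z ∈ D),
    r = FreeGroup.of (⟨x - y, Set.sub_mem_sub hx hy⟩ : ↥(D - D)) *
        FreeGroup.of (⟨y - z, Set.sub_mem_sub hy hz⟩ : ↥(D - D)) *
        (FreeGroup.of (⟨x - z, Set.sub_mem_sub hx hz⟩ : ↥(D - D)))⁻¹}

/-- The group `G_D`, the universal group of the point-set semigroup of `D`: the free group
on `D − D` modulo the normal closure of the relators. -/
abbrev GD {E : Type*} [AddGroup E] (D : Set E) : Type _ :=
  FreeGroup ↥(D - D) ⧸ Subgroup.normalClosure (pointRelators D)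

/-!
The relators say `(x - z) = (x - y) (y - z)` in `G_D`, so a chain `x = p₀, p₁, …, pₖ = y` of points
of `D` writes the generator `x - y` as a product of the generators `pᵢ - pᵢ₊₁`. If every point of
the ambient space is within `R` of `D` and `r > 2R`, then any two points of `D` are joined by a
chain in `D` with steps of length at most `r`: take a chain of points of the ambient space with
steps at most `r - 2R`, and move each of them to a point of `D` at distance at most `R`. Hence the
differences of norm at most `r` generate `G_D`, and only finitely many of them exist.
-/

open Relation

namespace GD

variable {E : Type*} [AddGroup E] {D : Set E}

/-- The canonical generator of `G_D` attached to a difference vector `v ∈ D − D`. -/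
def of (v : ↥(D - D)) : GD D :=
  QuotientGroup.mk (FreeGroup.of v)

theorem closure_range_of (D : Set E) : Subgroup.closure (Set.range (of (D := D))) = ⊤ :=
  PresentedGroup.closure_range_of (pointRelators D)

theorem of_sub_mul_of_sub (x y z : D) :
    of ⟨(x : E) - y, Set.sub_mem_sub x.2 y.2⟩ * of ⟨(y : E) - z, Set.sub_mem_sub y.2 z.2⟩ =
      of ⟨(x : E) - z, Set.sub_mem_sub x.2 z.2⟩ :=
  PresentedGroup.mk_eq_mk_of_mul_inv_mem (rels := pointRelators D)
    ⟨x, y, z, x.2, y.2, z.2, rfl⟩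

theorem of_sub_self (x : D) : of ⟨(x : E) - x, Set.sub_mem_sub x.2 x.2⟩ = 1 :=
  mul_eq_left.mp (of_sub_mul_of_sub x x x)

variable {S : Set E}

theorem of_sub_mem_closure_of_reflTransGen {x y : D}
    (hxy : ReflTransGen (fun a b : D ↦ (a : E) - b ∈ S) x y) :
    of ⟨(x : E) - y, Set.sub_mem_sub x.2 y.2⟩ ∈
      Subgroup.closure (of '' (Subtype.val ⁻¹' S : Set ↥(D - D))) := by
  induction hxy with
  | refl => exact of_sub_self x ▸ one_mem _
  | @tail y z _ hyz ih =>
    rw [← of_sub_mul_of_sub x y z]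
    exact mul_mem ih (Subgroup.subset_closure (Set.mem_image_of_mem of hyz))

theorem closure_image_of_eq_top
    (hS : ∀ x y : D, ReflTransGen (fun a b : D ↦ (a : E) - b ∈ S) x y) :
    Subgroup.closure (of '' (Subtype.val ⁻¹' S : Set ↥(D - D))) = ⊤ := by
  rw [eq_top_iff, ← closure_range_of D, Subgroup.closure_le]
  rintro _ ⟨⟨_, x, hx, y, hy, rfl⟩, rfl⟩
  exact of_sub_mem_closure_of_reflTransGen (hS ⟨x, hx⟩ ⟨y, hy⟩)

theorem fg_of_reflTransGen_sub_mem
    (hS : ∀ x y : D, ReflTransGen (fun a b : D ↦ (a : E) - b ∈ S) x y)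
    (hfin : ((D - D) ∩ S).Finite) : Group.FG (GD D) := by
  have hfin' : (Subtype.val ⁻¹' S : Set ↥(D - D)).Finite := by
    rw [← Subtype.preimage_coe_self_inter]
    exact hfin.preimage Subtype.val_injective.injOn
  exact Group.fg_iff.mpr ⟨_, closure_image_of_eq_top hS, hfin'.image of⟩

end GD

section Chains

variable {X : Type*} [PseudoMetricSpace X]

theorem reflTransGen_dist_le_of_pos [PreconnectedSpace X] {ε : ℝ} (hε : 0 < ε) (x y : X) :
    ReflTransGen (fun a b : X ↦ dist a b ≤ ε) x y := by
  refine PreconnectedSpace.induction₂' _ (fun a ↦ ?_) inferInstance x y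
  filter_upwards [Metric.closedBall_mem_nhds a hε] with b hb
  exact ⟨.single (Metric.mem_closedBall'.mp hb), .single (Metric.mem_closedBall.mp hb)⟩

theorem reflTransGen_dist_le_of_forall_exists_dist_le {D : Set X} {R ε : ℝ} (hε : 0 ≤ ε)
    (hD : ∀ c, ∃ x ∈ D, dist x c ≤ R) {x y : D}
    (hxy : ReflTransGen (fun a b : X ↦ dist a b ≤ ε) x y) :
    ReflTransGen (fun a b : D ↦ dist a b ≤ 2 * R + ε) x y := by
  have hD' : ∀ c, ∃ x : D, dist (x : X) c ≤ R := by simpa using hD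
  choose near dist_near using hD'
  have hR : 0 ≤ R := dist_nonneg.trans (dist_near x)
  have near_step (a b : X) (hab : dist a b ≤ ε) : dist (near a) (near b) ≤ 2 * R + ε :=
    calc dist (near a : X) (near b)
        ≤ dist (near a : X) a + dist a b + dist b (near b) := dist_triangle4 ..
      _ ≤ R + ε + R := by
        gcongr
        · exact dist_near a
        · exact dist_comm b (near b : X) ▸ dist_near b
      _ = 2 * R + ε := by ring
  have first_step : dist x (near x) ≤ 2 * R + ε := by
    rw [dist_comm, Subtype.dist_eq]
    linarith [dist_near x]
  have last_step : dist (near y) y ≤ 2 * R + ε := by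
    rw [Subtype.dist_eq]
    linarith [dist_near y]
  exact .head first_step (.tail (ReflTransGen.lift near near_step _ _ hxy) last_step)

end Chains

theorem GD_fg_of_flc_general {E : Type*} [SeminormedAddCommGroup E] [PreconnectedSpace E]
    {D : Set E} {R r : ℝ} (hD : ∀ c, ∃ x ∈ D, dist x c ≤ R) (hr : 2 * R < r)
    (hfin : ((D - D) ∩ Metric.closedBall 0 r).Finite) : Group.FG (GD D) := by
  refine GD.fg_of_reflTransGen_sub_mem (fun x y ↦ ?_) hfin
  have hε : 0 < r - 2 * R := sub_pos.mpr hr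
  have chain : ReflTransGen (fun a b : D ↦ dist a b ≤ 2 * R + (r - 2 * R)) x y :=
    reflTransGen_dist_le_of_forall_exists_dist_le hε.le hD (reflTransGen_dist_le_of_pos hε _ _)
  simpa only [add_sub_cancel, Subtype.dist_eq, dist_eq_norm, mem_closedBall_zero_iff] using chain

/-- A Delone set of finite local complexity has finitely generated universal group `G_D`. -/
theorem GD_fg_of_flc {n : ℕ} (D : Set (EuclideanSpace ℝ (Fin n)))
    (hud : ∃ r > 0, ∀ x ∈ D, ∀ y ∈ D, x ≠ y → r ≤ dist x y)
    (hrd : ∃ R > 0, ∀ c : EuclideanSpace ℝ (Fin n), ∃ x ∈ D, dist x c ≤ R)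
    (hflc : ∀ (c : EuclideanSpace ℝ (Fin n)) (R : ℝ),
      ((D - D) ∩ Metric.closedBall c R).Finite) :
    Group.FG (GD D) := by
  obtain ⟨R, hR, hD⟩ := hrd
  exact GD_fg_of_flc_general hD (r := 3 * R) (by linarith) (hflc 0 (3 * R))
end

section
/- Let r : ℤ → ℝ be strictly increasing with r(n) → +∞ as n → +∞ and r(n) → −∞ as n → −∞, let D = r(ℤ), let t(i) = r(i) − r(i−1) for i ∈ ℤ, and let Σ = {t(i) : i ∈ ℤ} ⊆ ℝ. Then G_D is isomorphic to the quotient of the free group on Σ by the normal subgroup generated by the elements (u₁)·(u₂)⋯(u_m)·((v₁)·(v₂)⋯(v_n))⁻¹ over all pairs of words u = (u₁,…,u_m) and v = (v₁,…,v_n) over Σ which occur in D and have equal length u₁+⋯+u_m = v₁+⋯+v_n. -/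
open Pointwise

/-- The gap alphabet `Σ = {t i : i ∈ ℤ}` of a gap sequence `t : ℤ → ℝ`. -/
def gapAlphabet (t : ℤ → ℝ) : Set ℝ := Set.range t

/-- A word `w` over `Σ` occurs in the point-set if its letters are consecutive gaps:
`w ≠ []` and there is `k ∈ ℤ` with `w j = t (k + j)` for all positions `j`. -/
def OccursIn (t : ℤ → ℝ) (w : List ↥(gapAlphabet t)) : Prop :=
  w ≠ [] ∧ ∃ k : ℤ, ∀ (j : ℕ) (h : j < w.length), ((w.get ⟨j, h⟩ : ℝ)) = t (k + j)

/-- The relators `(u₁)⋯(u_m)·((v₁)⋯(v_n))⁻¹` over all pairs of occurring words `u`, `v` of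
equal length `u₁+⋯+u_m = v₁+⋯+v_n`. -/
def gapRelators (t : ℤ → ℝ) : Set (FreeGroup ↥(gapAlphabet t)) :=
  {r | ∃ u v : List ↥(gapAlphabet t), OccursIn t u ∧ OccursIn t v ∧
    (u.map (fun x => (x : ℝ))).sum = (v.map (fun x => (x : ℝ))).sum ∧
    r = (u.map FreeGroup.of).prod * ((v.map FreeGroup.of).prod)⁻¹}

/-!
Call a map `p : ℤ → G` into a group *displacement invariant* if `(p i)⁻¹ * p j` depends only on
`r i - r j`. Both groups are universal for such maps. In `G_D` the universal map sends `j` to the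
class of `r 0 - r j`. In the gap group it is the primitive `P` of the gap classes, for which
`(P i)⁻¹ * P j`, with `i < j`, is the class of the word of gaps read from `r i` to `r j`; the
length of this word is `r j - r i`, so the defining relations say exactly that `P` is displacement
invariant. The resulting homomorphisms in the two directions are mutually inverse; the gap `t i`
corresponds to the difference `r (i - 1) - r i = -t i`.
-/

section Primitive

variable {G : Type*} [Group G]

/-- The primitive of a sequence `g : ℤ → G`, normalized to be `1` at `0`: at `n ≥ 0` it is the
product `g 1 * ⋯ * g n`. -/
def intPrimitive (g : ℤ → G) (i : ℤ) : G :=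
  Int.inductionOn' (motive := fun _ => G) i 0 1 (fun k _ x => x * g (k + 1))
    (fun k _ x => x * (g k)⁻¹)

theorem inv_intPrimitive_sub_one_mul_intPrimitive (g : ℤ → G) (i : ℤ) :
    (intPrimitive g (i - 1))⁻¹ * intPrimitive g i = g i := by
  rw [inv_mul_eq_iff_eq_mul]
  rcases le_or_gt i 0 with hi | hi
  · rw [intPrimitive, intPrimitive, Int.inductionOn'_sub_one hi, inv_mul_cancel_right]
  · obtain ⟨k, rfl⟩ : ∃ k, i = k + 1 := ⟨i - 1, by ring⟩
    rw [add_sub_cancel_right, intPrimitive, Int.inductionOn'_add_one (by lia)]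
    rfl

theorem inv_mul_eq_inv_mul_of_increments_eq {p q : ℤ → G}
    (h : ∀ i, (p (i - 1))⁻¹ * p i = (q (i - 1))⁻¹ * q i) (i j : ℤ) :
    (p i)⁻¹ * p j = (q i)⁻¹ * q j := by
  have periodic : Function.Periodic (fun i => p i * (q i)⁻¹) 1 := fun i => by
    have hi := h (i + 1)
    rw [add_sub_cancel_right, inv_mul_eq_iff_eq_mul] at hi
    simp only [hi]
    group
  have ratio_eq (i : ℤ) : p i = p 0 * (q 0)⁻¹ * q i := by
    simpa [mul_inv_eq_iff_eq_mul] using periodic.int_mul_eq i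
  rw [ratio_eq i, ratio_eq j]
  group

end Primitive

section FactorWord

/-- The factor `a (i + 1), …, a (i + m)` of a bi-infinite sequence `a`. When `a` is the sequence of
gaps of a point set, this is the word read on the way from the `i`-th to the `(i + m)`-th point. -/
def factorWord {α : Type*} (a : ℤ → α) (i : ℤ) (m : ℕ) : List α :=
  (List.range m).map fun j : ℕ => a (i + 1 + j)

@[to_additive]
theorem prod_map_factorWord {α G : Type*} [Group G] {a : ℤ → α} {f : α → G} {p : ℤ → G}
    (h : ∀ i, f (a i) = (p (i - 1))⁻¹ * p i) (i : ℤ) (m : ℕ) :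
    ((factorWord a i m).map f).prod = (p i)⁻¹ * p (i + m) := by
  induction m with
  | zero => simp [factorWord]
  | succ m ih =>
    have step : f (a (i + 1 + m)) = (p (i + m))⁻¹ * p (i + (m + 1 : ℕ)) := by
      rw [h, Nat.cast_succ, add_right_comm, add_sub_cancel_right, add_assoc]
    calc ((factorWord a i (m + 1)).map f).prod
        = ((factorWord a i m).map f).prod * f (a (i + 1 + m)) := by
          simp [factorWord, List.range_succ]
      _ = (p i)⁻¹ * p (i + (m + 1 : ℕ)) := by rw [ih, step, mul_assoc, mul_inv_cancel_left]

theorem freeGroupHom_prod_factorWord {α G : Type*} [Group G] {a : ℤ → α} {φ : FreeGroup α →* G}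
    {p : ℤ → G} (h : ∀ i, φ (FreeGroup.of (a i)) = (p (i - 1))⁻¹ * p i) (i : ℤ) (m : ℕ) :
    φ ((factorWord a i m).map FreeGroup.of).prod = (p i)⁻¹ * p (i + m) := by
  rw [map_list_prod, List.map_map]
  exact prod_map_factorWord (f := φ ∘ FreeGroup.of) h i m

end FactorWord

section DisplacementInvariant

variable {ι E G : Type*} [Group G]

/-- A family `p` in a group is displacement invariant with respect to a family of points `r` if
`(p i)⁻¹ * p j` depends only on the displacement `r i - r j`. -/
def DisplacementInvariant [AddGroup E] (r : ι → E) (p : ι → G) : Prop :=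
  ∀ ⦃i j i' j' : ι⦄, r i - r j = r i' - r j' → (p i)⁻¹ * p j = (p i')⁻¹ * p j'

theorem DisplacementInvariant.of_strictMono [LinearOrder ι] [AddGroup E] [Preorder E]
    [AddRightStrictMono E] {r : ι → E} (hr : StrictMono r) {p : ι → G}
    (h : ∀ ⦃i j i' j'⦄, i < j → i' < j' → r i - r j = r i' - r j' →
      (p i)⁻¹ * p j = (p i')⁻¹ * p j') :
    DisplacementInvariant r p := by
  have lt_of_sub_eq {i j i' j' : ι} (hij : i < j) (e : r i - r j = r i' - r j') : i' < j' :=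
    hr.lt_iff_lt.1 (sub_neg.1 (e ▸ sub_neg.2 (hr hij)))
  intro i j i' j' e
  rcases lt_trichotomy i j with hij | rfl | hij
  · exact h hij (lt_of_sub_eq hij e) e
  · obtain rfl : i' = j' := hr.injective (sub_eq_zero.1 (e.symm.trans (sub_self _)))
    simp only [inv_mul_cancel]
  · have e' : r j - r i = r j' - r i' := by rw [← neg_sub, e, neg_sub]
    have reversed := h hij (lt_of_sub_eq hij e') e'
    simpa only [mul_inv_rev, inv_inv] using congrArg (·⁻¹) reversed

end DisplacementInvariant

section PointGroup

variable {ι E G : Type*} [AddGroup E] [Group G]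

/-- The group `G_D` as a `PresentedGroup`; definitionally equal to `GD D`. -/
abbrev PointGroup (D : Set E) : Type _ := PresentedGroup (pointRelators D)

/-- The generator of `G_D`, `D = Set.range r`, given by the difference `r i - r j`. -/
def differenceClass (r : ι → E) (i j : ι) : PointGroup (Set.range r) :=
  PresentedGroup.of ⟨r i - r j, Set.sub_mem_sub ⟨i, rfl⟩ ⟨j, rfl⟩⟩

theorem differenceClass_congr {r : ι → E} {i j i' j' : ι} (h : r i - r j = r i' - r j') :
    differenceClass r i j = differenceClass r i' j' :=
  congrArg PresentedGroup.of (Subtype.ext h)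

theorem differenceClass_mul_differenceClass (r : ι → E) (i j k : ι) :
    differenceClass r i j * differenceClass r j k = differenceClass r i k :=
  PresentedGroup.mk_eq_mk_of_mul_inv_mem ⟨r i, r j, r k, ⟨i, rfl⟩, ⟨j, rfl⟩, ⟨k, rfl⟩, rfl⟩

theorem inv_differenceClass_mul_differenceClass (r : ι → E) (i j k : ι) :
    (differenceClass r k i)⁻¹ * differenceClass r k j = differenceClass r i j := by
  rw [inv_mul_eq_iff_eq_mul, differenceClass_mul_differenceClass]

theorem displacementInvariant_differenceClass (r : ι → E) (k : ι) :
    DisplacementInvariant r (differenceClass r k) := fun i j i' j' h => by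
  simpa only [inv_differenceClass_mul_differenceClass] using differenceClass_congr h

theorem PointGroup.hom_ext {r : ι → E} {φ ψ : PointGroup (Set.range r) →* G}
    (h : ∀ i j, φ (differenceClass r i j) = ψ (differenceClass r i j)) : φ = ψ := by
  refine PresentedGroup.ext ?_
  rintro ⟨_, _, ⟨i, rfl⟩, _, ⟨j, rfl⟩, rfl⟩
  exact h i j

theorem PointGroup.exists_hom {r : ι → E} {p : ι → G} (hp : DisplacementInvariant r p) :
    ∃ φ : PointGroup (Set.range r) →* G,
      ∀ i j, φ (differenceClass r i j) = (p i)⁻¹ * p j := by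
  have exists_value (d : ↥(Set.range r - Set.range r)) :
      ∃ x : G, ∀ i j, r i - r j = d → x = (p i)⁻¹ * p j := by
    obtain ⟨_, _, ⟨i, rfl⟩, _, ⟨j, rfl⟩, rfl⟩ := d
    exact ⟨(p i)⁻¹ * p j, fun i' j' h => hp h.symm⟩
  choose f hf using exists_value
  refine ⟨PresentedGroup.toGroup (f := f) ?_, fun i j => ?_⟩
  · rintro _ ⟨_, _, _, ⟨i, rfl⟩, ⟨j, rfl⟩, ⟨k, rfl⟩, rfl⟩
    simp only [map_mul, map_inv, FreeGroup.lift_apply_of]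
    rw [hf _ i j rfl, hf _ j k rfl, hf _ i k rfl]
    group
  · rw [differenceClass, PresentedGroup.toGroup.of, hf _ i j rfl]

end PointGroup

section GapGroup

variable {G : Type*} [Group G] {r t : ℤ → ℝ}

/-- The group presented by the gap alphabet and the relators of occurring words of equal length,
as a `PresentedGroup`. -/
abbrev GapGroup (t : ℤ → ℝ) : Type := PresentedGroup (gapRelators t)

/-- The gap `t i` as a letter of the gap alphabet. -/
def gapLetter (t : ℤ → ℝ) (i : ℤ) : ↥(gapAlphabet t) := ⟨t i, i, rfl⟩

/-- The generator of the gap group given by the gap `t i`. -/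
def gapClass (t : ℤ → ℝ) (i : ℤ) : GapGroup t := PresentedGroup.of (gapLetter t i)

theorem occursIn_iff_exists_factorWord {w : List ↥(gapAlphabet t)} :
    OccursIn t w ↔ ∃ (i : ℤ) (m : ℕ), m ≠ 0 ∧ w = factorWord (gapLetter t) i m := by
  constructor
  · rintro ⟨hw, k, hk⟩
    refine ⟨k - 1, w.length, by simpa using hw, List.ext_getElem (by simp [factorWord]) ?_⟩
    intro j hj _
    exact Subtype.ext (by simpa [factorWord, gapLetter] using hk j hj)
  · rintro ⟨i, m, hm, rfl⟩
    exact ⟨by simpa [factorWord] using hm, i + 1, by simp [factorWord, gapLetter]⟩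

-- Here, as in `gapRelators`, the elaborator inserts the coercion to `ℝ` on the whole list, through
-- the list monad; the first rewrites turn it into `List.map Subtype.val`.
theorem sum_factorWord_gapLetter (ht : ∀ i, t i = r i - r (i - 1)) (i : ℤ) (m : ℕ) :
    ((factorWord (gapLetter t) i m).map (fun x => (x : ℝ))).sum = r (i + m) - r i := by
  have increment (i : ℤ) : (gapLetter t i : ℝ) = -r (i - 1) + r i :=
    (ht i).trans (neg_add_eq_sub _ _).symm
  rw [List.map_id', bind_pure_comp, List.map_eq_map, sum_map_factorWord increment, neg_add_eq_sub]

theorem mk_prod_factorWord_gapLetter (t : ℤ → ℝ) (i : ℤ) (m : ℕ) :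
    PresentedGroup.mk (gapRelators t) ((factorWord (gapLetter t) i m).map FreeGroup.of).prod =
      (intPrimitive (gapClass t) i)⁻¹ * intPrimitive (gapClass t) (i + m) :=
  freeGroupHom_prod_factorWord
    (fun i => (inv_intPrimitive_sub_one_mul_intPrimitive (gapClass t) i).symm) i m

theorem displacementInvariant_intPrimitive_gapClass (hr : StrictMono r)
    (ht : ∀ i, t i = r i - r (i - 1)) :
    DisplacementInvariant r (intPrimitive (gapClass t)) := by
  refine .of_strictMono hr fun i j i' j' hij hij' h => ?_
  obtain ⟨m, rfl⟩ := Int.le.dest hij.le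
  obtain ⟨m', rfl⟩ := Int.le.dest hij'.le
  rw [← mk_prod_factorWord_gapLetter, ← mk_prod_factorWord_gapLetter]
  refine PresentedGroup.mk_eq_mk_of_mul_inv_mem ⟨_, _,
    occursIn_iff_exists_factorWord.2 ⟨i, m, by lia, rfl⟩,
    occursIn_iff_exists_factorWord.2 ⟨i', m', by lia, rfl⟩, ?_, rfl⟩
  rw [sum_factorWord_gapLetter ht, sum_factorWord_gapLetter ht]
  linarith

theorem GapGroup.hom_ext {φ ψ : GapGroup t →* G} (h : ∀ i, φ (gapClass t i) = ψ (gapClass t i)) :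
    φ = ψ := by
  refine PresentedGroup.ext ?_
  rintro ⟨_, i, rfl⟩
  exact h i

theorem GapGroup.exists_hom (ht : ∀ i, t i = r i - r (i - 1)) {p : ℤ → G}
    (hp : DisplacementInvariant r p) :
    ∃ φ : GapGroup t →* G, ∀ i, φ (gapClass t i) = (p (i - 1))⁻¹ * p i := by
  have exists_value (s : ↥(gapAlphabet t)) :
      ∃ x : G, ∀ i, gapLetter t i = s → x = (p (i - 1))⁻¹ * p i := by
    obtain ⟨_, i, rfl⟩ := s
    refine ⟨(p (i - 1))⁻¹ * p i, fun i' h => hp ?_⟩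
    have gap_eq : t i' = t i := congrArg Subtype.val h
    linarith [ht i, ht i']
  choose f hf using exists_value
  have lift_letter (i : ℤ) :
      FreeGroup.lift f (FreeGroup.of (gapLetter t i)) = (p (i - 1))⁻¹ * p i := by
    rw [FreeGroup.lift_apply_of, hf _ i rfl]
  refine ⟨PresentedGroup.toGroup (f := f) ?_, fun i => ?_⟩
  · rintro _ ⟨u, v, hu, hv, hsum, rfl⟩
    obtain ⟨i, m, -, rfl⟩ := occursIn_iff_exists_factorWord.1 hu
    obtain ⟨i', m', -, rfl⟩ := occursIn_iff_exists_factorWord.1 hv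
    rw [sum_factorWord_gapLetter ht, sum_factorWord_gapLetter ht] at hsum
    rw [map_mul, map_inv, mul_inv_eq_one, freeGroupHom_prod_factorWord lift_letter,
      freeGroupHom_prod_factorWord lift_letter]
    exact hp (by linarith)
  · rw [gapClass, PresentedGroup.toGroup.of, hf _ i rfl]

end GapGroup

theorem GD_iso_gap_presentation_general (r : ℤ → ℝ) (hmono : StrictMono r)
    (t : ℤ → ℝ) (ht : ∀ i : ℤ, t i = r i - r (i - 1)) :
    Nonempty (GD (Set.range r) ≃*
      FreeGroup ↥(gapAlphabet t) ⧸ Subgroup.normalClosure (gapRelators t)) := by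
  obtain ⟨φ, hφ⟩ :=
    PointGroup.exists_hom (displacementInvariant_intPrimitive_gapClass hmono ht)
  obtain ⟨ψ, hψ⟩ := GapGroup.exists_hom ht (displacementInvariant_differenceClass r 0)
  have hψ_intPrimitive : ∀ i j, (ψ (intPrimitive (gapClass t) i))⁻¹ *
      ψ (intPrimitive (gapClass t) j) = (differenceClass r 0 i)⁻¹ * differenceClass r 0 j :=
    inv_mul_eq_inv_mul_of_increments_eq fun i => by
      rw [← map_inv, ← map_mul, inv_intPrimitive_sub_one_mul_intPrimitive, hψ]
  have hψφ : ψ.comp φ = .id _ := PointGroup.hom_ext fun i j => by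
    rw [MonoidHom.comp_apply, hφ, map_mul, map_inv, hψ_intPrimitive,
      inv_differenceClass_mul_differenceClass, MonoidHom.id_apply]
  have hφψ : φ.comp ψ = .id _ := GapGroup.hom_ext fun i => by
    rw [MonoidHom.comp_apply, hψ, inv_differenceClass_mul_differenceClass, hφ,
      inv_intPrimitive_sub_one_mul_intPrimitive, MonoidHom.id_apply]
  exact ⟨φ.toMulEquiv ψ hψφ hφψ⟩

/-- For a discrete point-set `D = r(ℤ) ⊆ ℝ` given by a strictly increasing unbounded
enumeration `r`, with gaps `t i = r i − r (i−1)`, the group `G_D` is isomorphic to the free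
group on the gap alphabet `Σ` modulo the relators coming from pairs of occurring words of
equal length. -/
theorem GD_iso_gap_presentation (r : ℤ → ℝ) (hmono : StrictMono r)
    (htop : Filter.Tendsto r Filter.atTop Filter.atTop)
    (hbot : Filter.Tendsto r Filter.atBot Filter.atBot)
    (t : ℤ → ℝ) (ht : ∀ i : ℤ, t i = r i - r (i - 1)) :
    Nonempty (GD (Set.range r) ≃*
      FreeGroup ↥(gapAlphabet t) ⧸ Subgroup.normalClosure (gapRelators t)) :=
  GD_iso_gap_presentation_general r hmono t ht
end

section
/- Let a, b be positive real numbers with a ≠ b and a/b rational, and let D = {n·(a+b) : n ∈ ℤ} ∪ {n·(a+b) + a : n ∈ ℤ} ⊆ ℝ (the point-set of the periodic tiling …ababab…). Then G_D is isomorphic to ℤ². -/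
open Pointwise

/-!
Write `p = a + b`, so that `D = ℤp ∪ (ℤp + a)`. The homomorphism `ℤ² → ℝ`, `(m, n) ↦ mp + na`, maps
the strip `ℤ × {0, 1}` onto `D`, and since `2a ∉ ℤp` it is injective on the differences of the
strip, even though it has a nontrivial kernel when `a / b` is rational. As the relators of `G_D`
only involve differences, `G_D` is the universal group of the strip. In the latter group the class
`u` of the vertical step `(0, 1)` commutes with the class `τ` of every horizontal translation,
because the two paths around a rectangle give `u τ = τ u`; together these classes generate a copy
of `ℤ²`.
-/

namespace GD

section PointSet

variable {E : Type*} [AddGroup E] {D : Set E}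

/-- The class in `G_D` of the generator `x − y`, for two points `x`, `y` of `D`. It is indexed by
pairs of points rather than by elements of `D − D` to keep membership proofs out of terms. -/
def diff (x y : D) : GD D :=
  QuotientGroup.mk (FreeGroup.of ⟨x - y, Set.sub_mem_sub x.2 y.2⟩)

theorem diff_eq_diff {x y x' y' : D} (h : (x : E) - y = x' - y') : diff x y = diff x' y' := by
  simp only [diff, h]

theorem diff_mul_diff (x y z : D) : diff x y * diff y z = diff x z := by
  refine mul_inv_eq_one.mp ((QuotientGroup.eq_one_iff _).mpr ?_)
  exact Subgroup.subset_normalClosure ⟨x, y, z, x.2, y.2, z.2, rfl⟩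

theorem diff_div_diff (x y z : D) : diff x z / diff y z = diff x y :=
  div_eq_iff_eq_mul.mpr (diff_mul_diff x y z).symm

theorem monoidHom_ext {M : Type*} [Monoid M] {f g : GD D →* M}
    (h : ∀ x y : D, f (diff x y) = g (diff x y)) : f = g := by
  refine QuotientGroup.monoidHom_ext _ (FreeGroup.ext_hom _ _ ?_)
  rintro ⟨_, x, hx, y, hy, rfl⟩
  exact h ⟨x, hx⟩ ⟨y, hy⟩

variable (D) in
theorem normalClosure_pointRelators_le_ker :
    Subgroup.normalClosure (pointRelators D) ≤
      (FreeGroup.lift fun d : ↥(D - D) => Multiplicative.ofAdd (d : E)).ker := by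
  refine Subgroup.normalClosure_le_normal ?_
  rintro _ ⟨x, y, z, hx, hy, hz, rfl⟩
  simp [MonoidHom.mem_ker]

variable (D) in
/-- The canonical homomorphism from `G_D` to the ambient group, sending the class of a difference
`x − y` to `x − y` itself. -/
def eval : GD D →* Multiplicative E :=
  QuotientGroup.lift _ _ (normalClosure_pointRelators_le_ker D)

theorem eval_diff (x y : D) : eval D (diff x y) = Multiplicative.ofAdd ((x : E) - y) :=
  FreeGroup.lift_apply_of

end PointSet

section Image

variable {E F : Type*} [AddGroup E] [AddGroup F] {D : Set E} {f : E →+ F}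

/-- The bijection between the differences of `D` and those of `f '' D` induced by a homomorphism
`f` that is injective on `D − D`. -/
noncomputable def subImageEquiv (hf : Set.InjOn f (D - D)) :
    ↥(D - D) ≃ ↥(f '' D - f '' D) :=
  (Equiv.Set.imageOfInjOn f _ hf).trans (Equiv.setCongr (Set.image_sub f))

theorem subImageEquiv_sub (hf : Set.InjOn f (D - D)) {x y : E} (hx : x ∈ D) (hy : y ∈ D) :
    subImageEquiv hf ⟨x - y, Set.sub_mem_sub hx hy⟩ =
      ⟨f x - f y, Set.sub_mem_sub (Set.mem_image_of_mem f hx) (Set.mem_image_of_mem f hy)⟩ :=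
  Subtype.ext (map_sub f x y)

theorem image_pointRelators (hf : Set.InjOn f (D - D)) :
    FreeGroup.freeGroupCongr (subImageEquiv hf) '' pointRelators D = pointRelators (f '' D) := by
  ext r
  constructor
  · rintro ⟨_, ⟨x, y, z, hx, hy, hz, rfl⟩, rfl⟩
    refine ⟨f x, f y, f z, Set.mem_image_of_mem f hx, Set.mem_image_of_mem f hy,
      Set.mem_image_of_mem f hz, ?_⟩
    simp [subImageEquiv_sub, hx, hy, hz]
  · rintro ⟨_, _, _, ⟨x, hx, rfl⟩, ⟨y, hy, rfl⟩, ⟨z, hz, rfl⟩, rfl⟩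
    refine ⟨_, ⟨x, y, z, hx, hy, hz, rfl⟩, ?_⟩
    simp [subImageEquiv_sub, hx, hy, hz]

/-- A homomorphism injective on `D − D` identifies the universal groups of `D` and `f '' D`. -/
noncomputable def imageEquiv (hf : Set.InjOn f (D - D)) : GD D ≃* GD (f '' D) :=
  QuotientGroup.congr _ _ (FreeGroup.freeGroupCongr (subImageEquiv hf)) <| by
    rw [Subgroup.map_normalClosure _ _ (MulEquiv.surjective _)]
    exact congrArg Subgroup.normalClosure (image_pointRelators hf)

end Image

end GD

/-- The strip `L × {0, 1}` in `L × ℤ`. -/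
def strip (L : Type*) : Set (L × ℤ) := Set.univ ×ˢ {0, 1}

namespace strip

variable {L : Type*}

/-- The point `(l, 0)` of the strip. -/
def bottom (l : L) : strip L := ⟨(l, 0), by simp [strip]⟩

/-- The point `(l, 1)` of the strip. -/
def top (l : L) : strip L := ⟨(l, 1), by simp [strip]⟩

theorem eq_bottom_or_eq_top (x : strip L) : (∃ l, x = bottom l) ∨ ∃ l, x = top l := by
  obtain ⟨⟨l, n⟩, -, hn⟩ := x
  obtain rfl | rfl : n = 0 ∨ n = 1 := hn
  exacts [.inl ⟨l, rfl⟩, .inr ⟨l, rfl⟩]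

variable [AddGroup L]

open GD

/-- The classes of the horizontal translations `(l, 0)` in the universal group of the strip. -/
def horizontal : Multiplicative L →* GD (strip L) :=
  MonoidHom.mk' (fun l => diff (bottom l.toAdd) (bottom 0)) fun l m => by
    rw [← diff_mul_diff _ (bottom m.toAdd)]
    congr 1
    exact diff_eq_diff (by simp [bottom])

variable (L) in
/-- The class of the vertical step `(0, 1)` in the universal group of the strip. -/
def vertical : GD (strip L) := diff (top 0) (bottom 0)

theorem diff_top_bottom (l : L) : diff (top l) (bottom l) = vertical L :=
  diff_eq_diff (by simp [top, bottom])

theorem diff_top_top_zero (l : L) :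
    diff (top l) (top 0) = horizontal (Multiplicative.ofAdd l) :=
  diff_eq_diff (by simp [top, bottom])

theorem horizontal_mul_vertical (l : L) :
    horizontal (Multiplicative.ofAdd l) * vertical L = diff (top l) (bottom 0) := by
  rw [← diff_top_top_zero, vertical, diff_mul_diff]

theorem vertical_mul_horizontal (l : L) :
    vertical L * horizontal (Multiplicative.ofAdd l) = diff (top l) (bottom 0) := by
  rw [← diff_top_bottom l]
  exact diff_mul_diff _ _ _

theorem commute_horizontal_vertical (l : Multiplicative L) :
    Commute (horizontal l) (vertical L) :=
  (horizontal_mul_vertical l.toAdd).trans (vertical_mul_horizontal l.toAdd).symm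

variable (L) in
/-- The homomorphism from `L × ℤ` to the universal group of the strip determined by the horizontal
and vertical classes; it inverts `GD.eval`. -/
def ofLattice : Multiplicative (L × ℤ) →* GD (strip L) :=
  (MonoidHom.noncommCoprod horizontal (zpowersHom _ (vertical L))
    fun l n => (commute_horizontal_vertical l).zpow_right n.toAdd).comp
      (MulEquiv.prodMultiplicative L ℤ).toMonoidHom

theorem ofLattice_ofAdd (l : L) (n : ℤ) :
    ofLattice L (Multiplicative.ofAdd (l, n)) =
      horizontal (Multiplicative.ofAdd l) * vertical L ^ n :=
  rfl

theorem ofLattice_ofAdd_coe (x : strip L) :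
    ofLattice L (Multiplicative.ofAdd (x : L × ℤ)) = diff x (bottom 0) := by
  obtain ⟨l, rfl⟩ | ⟨l, rfl⟩ := eq_bottom_or_eq_top x
  · simp only [bottom, ofLattice_ofAdd, zpow_zero, mul_one]
    rfl
  · simp only [top, ofLattice_ofAdd, zpow_one]
    exact horizontal_mul_vertical l

theorem ofLattice_comp_eval : (ofLattice L).comp (eval (strip L)) = MonoidHom.id _ :=
  GD.monoidHom_ext fun x y => by
    rw [MonoidHom.comp_apply, eval_diff, ofAdd_sub, map_div, ofLattice_ofAdd_coe,
      ofLattice_ofAdd_coe, diff_div_diff, MonoidHom.id_apply]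

theorem eval_comp_ofLattice : (eval (strip L)).comp (ofLattice L) = MonoidHom.id _ := by
  refine MonoidHom.ext fun x => ?_
  obtain ⟨⟨l, n⟩, rfl⟩ := Multiplicative.ofAdd.surjective x
  have eval_horizontal : eval (strip L) (horizontal (Multiplicative.ofAdd l)) =
      Multiplicative.ofAdd (l, 0) := by
    simp [horizontal, eval_diff, bottom]
  have eval_vertical : eval (strip L) (vertical L) = Multiplicative.ofAdd (0, 1) := by
    simp [vertical, eval_diff, top, bottom]
  rw [MonoidHom.comp_apply, ofLattice_ofAdd, map_mul, map_zpow, eval_horizontal, eval_vertical]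
  simp [← ofAdd_zsmul, ← ofAdd_add]

variable (L) in
/-- The universal group of the strip `L × {0, 1}` is `L × ℤ`. -/
def universalGroupEquiv : GD (strip L) ≃* Multiplicative (L × ℤ) :=
  MonoidHom.toMulEquiv (eval (strip L)) (ofLattice L) ofLattice_comp_eval eval_comp_ofLattice

theorem natAbs_snd_le_one_of_mem_sub {k : L × ℤ} (hk : k ∈ strip L - strip L) :
    k.2.natAbs ≤ 1 := by
  obtain ⟨x, ⟨-, hx⟩, y, ⟨-, hy⟩, rfl⟩ := hk
  simp only [Set.mem_insert_iff, Set.mem_singleton_iff] at hx hy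
  simp only [Prod.snd_sub]
  omega

end strip

section TwoCosets

variable {L E : Type*} [AddGroup L] [AddCommGroup E] {f : L →+ E} {a : E}

theorem image_strip_coprod_zmultiplesHom (f : L →+ E) (a : E) :
    f.coprod (zmultiplesHom E a) '' strip L = Set.range f ∪ Set.range fun l => f l + a := by
  ext x
  simp [strip, Set.mem_prod, or_and_right, exists_or, and_or_left]

theorem eq_zero_of_map_add_zsmul_eq_zero (hf : Function.Injective f) (ha : 2 • a ∉ f.range)
    {l : L} {n : ℤ} (hn : n.natAbs ≤ 2) (h : f l + n • a = 0) : l = 0 ∧ n = 0 := by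
  have n_eq_zero : n = 0 := by
    by_contra hn0
    obtain ⟨m, hm⟩ : n ∣ 2 := by
      have : n = 1 ∨ n = -1 ∨ n = 2 ∨ n = -2 := by omega
      rcases this with rfl | rfl | rfl | rfl <;> norm_num
    have na_mem : n • a ∈ f.range := ⟨-l, by rw [map_neg, neg_eq_of_add_eq_zero_right h]⟩
    refine ha ?_
    rw [← natCast_zsmul, Nat.cast_ofNat, hm, mul_comm, mul_zsmul]
    exact zsmul_mem na_mem m
  refine ⟨hf ?_, n_eq_zero⟩
  simpa [n_eq_zero] using h

theorem injOn_coprod_zmultiplesHom (hf : Function.Injective f) (ha : 2 • a ∉ f.range) :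
    Set.InjOn (f.coprod (zmultiplesHom E a)) (strip L - strip L) := by
  intro k hk k' hk' h
  have hk2 := strip.natAbs_snd_le_one_of_mem_sub hk
  have hk2' := strip.natAbs_snd_le_one_of_mem_sub hk'
  have sub_mem_ker : f (k - k').1 + (k - k').2 • a = 0 := by
    simpa using (map_sub (f.coprod (zmultiplesHom E a)) k k').trans (sub_eq_zero.mpr h)
  have := eq_zero_of_map_add_zsmul_eq_zero hf ha
    (by simp only [Prod.snd_sub]; omega) sub_mem_ker
  exact sub_eq_zero.mp (Prod.ext this.1 this.2)

theorem nonempty_GD_range_union_translate_mulEquiv (hf : Function.Injective f)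
    (ha : 2 • a ∉ f.range) :
    Nonempty (GD (Set.range f ∪ Set.range fun l => f l + a) ≃* Multiplicative (L × ℤ)) := by
  rw [← image_strip_coprod_zmultiplesHom]
  exact ⟨(GD.imageEquiv (injOn_coprod_zmultiplesHom hf ha)).symm.trans
    (strip.universalGroupEquiv L)⟩

end TwoCosets

theorem two_nsmul_notMem_zmultiples_add {α : Type*} [AddCommGroup α] [LinearOrder α]
    [IsOrderedAddMonoid α] {a b : α} (ha : 0 < a) (hb : 0 < b) (hab : a ≠ b) :
    2 • a ∉ AddSubgroup.zmultiples (a + b) := by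
  rintro ⟨n, hn : n • (a + b) = 2 • a⟩
  have period_pos : 0 < a + b := add_pos ha hb
  have n_pos : 0 < n := by
    rw [← zsmul_lt_zsmul_iff_left period_pos, zero_zsmul, hn]
    exact nsmul_pos ha two_ne_zero
  have n_lt_two : n < 2 := by
    rw [← zsmul_lt_zsmul_iff_left period_pos, hn, two_zsmul, two_nsmul]
    gcongr <;> simpa
  obtain rfl : n = 1 := by omega
  rw [one_zsmul, two_nsmul] at hn
  exact hab (add_left_cancel hn).symm

theorem GD_periodic_ab_general {E : Type*} [AddCommGroup E] {a b : E} {D : Set E}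
    (hD : D = {x : E | ∃ n : ℤ, x = n • (a + b)} ∪ {x : E | ∃ n : ℤ, x = n • (a + b) + a})
    (hperiod : ¬IsOfFinAddOrder (a + b)) (ha : 2 • a ∉ AddSubgroup.zmultiples (a + b)) :
    Nonempty (GD D ≃* Multiplicative (ℤ × ℤ)) := by
  have hD_range : D = Set.range (zmultiplesHom E (a + b)) ∪
      Set.range fun n => zmultiplesHom E (a + b) n + a := by
    rw [hD]
    ext x
    simp [eq_comm]
  have hinj : Function.Injective (zmultiplesHom E (a + b)) :=
    injective_zsmul_iff_not_isOfFinAddOrder.mpr hperiod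
  rw [hD_range]
  exact nonempty_GD_range_union_translate_mulEquiv hinj ha

/-- For the point-set of the periodic tiling `…ababab…` with `a ≠ b` and `a/b ∈ ℚ`, the
universal group `G_D` is isomorphic to `ℤ²`. -/
theorem GD_periodic_ab {a b : ℝ} (ha : 0 < a) (hb : 0 < b) (hab : a ≠ b)
    (hrat : ∃ q : ℚ, a / b = (q : ℝ)) :
    Nonempty (GD ({x : ℝ | ∃ n : ℤ, x = n * (a + b)} ∪
        {x : ℝ | ∃ n : ℤ, x = n * (a + b) + a}) ≃*
      Multiplicative (ℤ × ℤ)) :=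
  GD_periodic_ab_general (by simp only [zsmul_eq_mul])
    (not_isOfFinAddOrder_of_isAddTorsionFree (add_pos ha hb).ne')
    (two_nsmul_notMem_zmultiples_add ha hb hab)
end

section
/- Let Σ be an alphabet and L a factorial language over Σ. Then the universal group U(L) of L (equivalently, of the connected tiling semigroup S(L)) is isomorphic to the free group on the set L₂ = {w ∈ L : w has length 2}. -/
/-- A factorial language: a set of nonempty words closed under taking nonempty contiguous
factors. -/
def IsFactorial {α : Type*} (L : Set (List α)) : Prop :=
  (∀ w ∈ L, w ≠ []) ∧ ∀ u v w : List α, u ++ v ++ w ∈ L → v ≠ [] → v ∈ L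

/-- The relators `(u)·(v)·((u∘v))⁻¹` over all `u, v ∈ L` for which `u∘v` is defined, i.e.
the last letter of `u` equals the first letter of `v` and `u ++ tail v ∈ L`; then
`u∘v = u ++ tail v`. -/
def langRelators {α : Type*} (L : Set (List α)) : Set (FreeGroup ↥L) :=
  {r | ∃ u v uv : ↥L,
    (u : List α).getLast? = (v : List α).head? ∧
    (uv : List α) = (u : List α) ++ (v : List α).tail ∧
    r = FreeGroup.of u * FreeGroup.of v * (FreeGroup.of uv)⁻¹}

/-- The universal group `U(L)` of a language `L` (the universal group of the connected
tiling semigroup `S(L)`). -/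
abbrev LangGroup {α : Type*} (L : Set (List α)) : Type _ :=
  FreeGroup ↥L ⧸ Subgroup.normalClosure (langRelators L)

/-!
Cutting a word `a₁a₂⋯aₙ` of `L` at each of its inner letters writes it in `U(L)` as the product
`(a₁a₂)(a₂a₃)⋯(aₙ₋₁aₙ)`, so the two-letter words generate `U(L)`. Conversely, the product of the
consecutive pairs of letters, taken in the free group on `L₂`, is multiplicative under `∘`, so it
respects the relators and yields an inverse. One-letter words are idempotent and hence trivial,
matching the empty product.
-/

section ConsecutiveProd

variable {α M : Type*} [Monoid M]

/-- The product `f a₁ a₂ * f a₂ a₃ * ⋯ * f aₙ₋₁ aₙ` over the consecutive pairs of letters of the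
word `a₁a₂⋯aₙ`; it is `1` on words with fewer than two letters. -/
def consecutiveProd (f : α → α → M) (w : List α) : M :=
  (List.zipWith f w w.tail).prod

variable (f : α → α → M)

theorem consecutiveProd_nil : consecutiveProd f [] = 1 := rfl

theorem consecutiveProd_singleton (a : α) : consecutiveProd f [a] = 1 := rfl

theorem consecutiveProd_cons_cons (a b : α) (t : List α) :
    consecutiveProd f (a :: b :: t) = f a b * consecutiveProd f (b :: t) :=
  List.prod_cons

theorem consecutiveProd_pair (a b : α) : consecutiveProd f [a, b] = f a b := by
  rw [consecutiveProd_cons_cons, consecutiveProd_singleton, mul_one]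

theorem consecutiveProd_append_tail (v : List α) :
    ∀ u : List α, u.getLast? = v.head? →
      consecutiveProd f (u ++ v.tail) = consecutiveProd f u * consecutiveProd f v
  | [], h => by
    obtain rfl : v = [] := List.head?_eq_none_iff.1 h.symm
    simp [consecutiveProd_nil]
  | [a], h => by
    have hv : a :: v.tail = v := List.cons_head?_tail h.symm
    rw [List.singleton_append, hv, consecutiveProd_singleton, one_mul]
  | a :: b :: t, h => by
    have ih := consecutiveProd_append_tail v (b :: t) (by rwa [List.getLast?_cons_cons] at h)
    simp only [List.cons_append, consecutiveProd_cons_cons] at ih ⊢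
    rw [ih, mul_assoc]

end ConsecutiveProd

namespace IsFactorial

variable {α : Type*} {L : Set (List α)} {a b : α} {t : List α}

theorem pair_mem (hL : IsFactorial L) (h : a :: b :: t ∈ L) : [a, b] ∈ L :=
  hL.2 [] [a, b] t h (List.cons_ne_nil _ _)

theorem tail_mem (hL : IsFactorial L) (h : a :: b :: t ∈ L) : b :: t ∈ L :=
  hL.2 [a] (b :: t) [] (by rwa [List.append_nil]) (List.cons_ne_nil _ _)

end IsFactorial

namespace LangGroup

variable {α G : Type*} [Group G] {L : Set (List α)}

/-- The canonical map `L → U(L)`. -/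
def of (w : L) : LangGroup L := PresentedGroup.of w

theorem of_mul_of {u v uv : L} (hmatch : (u : List α).getLast? = (v : List α).head?)
    (huv : (uv : List α) = u ++ (v : List α).tail) : of u * of v = of uv :=
  mul_inv_eq_one.1 (PresentedGroup.one_of_mem ⟨u, v, uv, hmatch, huv, rfl⟩)

theorem of_singleton {a : α} (ha : [a] ∈ L) : of ⟨[a], ha⟩ = 1 :=
  mul_eq_left.1 (of_mul_of (u := ⟨[a], ha⟩) (v := ⟨[a], ha⟩) rfl rfl)

theorem of_cons_cons {a b : α} {t : List α} (hab : [a, b] ∈ L) (ht : b :: t ∈ L)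
    (h : a :: b :: t ∈ L) : of ⟨a :: b :: t, h⟩ = of ⟨[a, b], hab⟩ * of ⟨b :: t, ht⟩ :=
  (of_mul_of (u := ⟨[a, b], hab⟩) (v := ⟨b :: t, ht⟩) rfl rfl).symm

/-- The universal property of `U(L)`: a map from `L` to a group that is multiplicative on the
defined products `u∘v` extends to a homomorphism on `U(L)`. -/
def lift (f : L → G)
    (hf : ∀ u v uv : L, (u : List α).getLast? = (v : List α).head? →
      (uv : List α) = u ++ (v : List α).tail → f u * f v = f uv) :
    LangGroup L →* G :=
  PresentedGroup.toGroup (f := f) (rels := langRelators L) <| by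
    rintro _ ⟨u, v, uv, hmatch, huv, rfl⟩
    simp only [map_mul, map_inv, FreeGroup.lift_apply_of, hf u v uv hmatch huv, mul_inv_cancel]

theorem lift_of (f : L → G)
    (hf : ∀ u v uv : L, (u : List α).getLast? = (v : List α).head? →
      (uv : List α) = u ++ (v : List α).tail → f u * f v = f uv) (w : L) :
    lift f hf (of w) = f w :=
  PresentedGroup.toGroup.of _

theorem hom_ext {φ ψ : LangGroup L →* G} (h : ∀ w : L, φ (of w) = ψ (of w)) : φ = ψ :=
  PresentedGroup.ext h

variable (L)

open Classical in
/-- The generator `ab` of the free group on `L₂`, with the junk value `1` when `ab ∉ L`. -/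
noncomputable def pairGenerator (a b : α) : FreeGroup {w ∈ L | w.length = 2} :=
  if h : [a, b] ∈ L then FreeGroup.of ⟨[a, b], h, rfl⟩ else 1

/-- The homomorphism from `U(L)` to the free group on `L₂` sending a word to the product of its
two-letter factors, read from left to right. -/
noncomputable def toFreeGroup : LangGroup L →* FreeGroup {w ∈ L | w.length = 2} :=
  lift (fun w => consecutiveProd (pairGenerator L) w) fun u v uv hmatch huv => by
    rw [huv, consecutiveProd_append_tail _ _ _ hmatch]

/-- The homomorphism from the free group on `L₂` to `U(L)` induced by the inclusion `L₂ ⊆ L`. -/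
def ofFreeGroup : FreeGroup {w ∈ L | w.length = 2} →* LangGroup L :=
  FreeGroup.lift fun w => of ⟨w, w.2.1⟩

variable {L}

theorem pairGenerator_of_mem {a b : α} (h : [a, b] ∈ L) :
    pairGenerator L a b = FreeGroup.of ⟨[a, b], h, rfl⟩ :=
  dif_pos h

theorem toFreeGroup_of (w : L) : toFreeGroup L (of w) = consecutiveProd (pairGenerator L) w :=
  lift_of _ _ w

theorem ofFreeGroup_of (w : {w ∈ L | w.length = 2}) :
    ofFreeGroup L (FreeGroup.of w) = of ⟨w, w.2.1⟩ :=
  FreeGroup.lift_apply_of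

theorem ofFreeGroup_consecutiveProd (hL : IsFactorial L) :
    ∀ (w : List α) (hw : w ∈ L), ofFreeGroup L (consecutiveProd (pairGenerator L) w) = of ⟨w, hw⟩
  | [], hw => absurd rfl (hL.1 _ hw)
  | [a], hw => by rw [consecutiveProd_singleton, map_one, of_singleton]
  | a :: b :: t, hw => by
    have hab : [a, b] ∈ L := hL.pair_mem hw
    have ht : b :: t ∈ L := hL.tail_mem hw
    rw [consecutiveProd_cons_cons, map_mul, ofFreeGroup_consecutiveProd hL (b :: t) ht,
      pairGenerator_of_mem hab, ofFreeGroup_of, of_cons_cons hab ht]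

theorem ofFreeGroup_comp_toFreeGroup (hL : IsFactorial L) :
    (ofFreeGroup L).comp (toFreeGroup L) = MonoidHom.id (LangGroup L) :=
  hom_ext fun w => by
    rw [MonoidHom.comp_apply, toFreeGroup_of, ofFreeGroup_consecutiveProd hL w w.2,
      MonoidHom.id_apply]

variable (L) in
theorem toFreeGroup_comp_ofFreeGroup :
    (toFreeGroup L).comp (ofFreeGroup L) = MonoidHom.id (FreeGroup {w ∈ L | w.length = 2}) := by
  refine FreeGroup.ext_hom _ _ fun ⟨w, hw, hlen⟩ => ?_
  obtain ⟨a, b, rfl⟩ := List.length_eq_two.1 hlen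
  rw [MonoidHom.comp_apply, ofFreeGroup_of, toFreeGroup_of, consecutiveProd_pair,
    pairGenerator_of_mem hw, MonoidHom.id_apply]

end LangGroup

/-- For a factorial language `L`, the universal group `U(L)` is isomorphic to the free group
on the set `L₂` of words of length 2 in `L`. -/
theorem langGroup_iso_freeGroup_L2 {α : Type*} (L : Set (List α)) (hL : IsFactorial L) :
    Nonempty (LangGroup L ≃* FreeGroup ↥{w ∈ L | w.length = 2}) :=
  ⟨(LangGroup.toFreeGroup L).toMulEquiv (LangGroup.ofFreeGroup L)
    (LangGroup.ofFreeGroup_comp_toFreeGroup hL) (LangGroup.toFreeGroup_comp_ofFreeGroup L)⟩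
end
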